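/- (The smooth acyclicity characterization, Eq. (4), on which the reward's penalty terms are based.) Let d : ℕ and let A : Matrix (Fin d) (Fin d) ℝ be a binary adjacency matrix. Then A is acyclic if and only if trace(Matrix.exp A) − d = 0, i.e., h(A) = 0. -/

import Mathlib

/-- A binary adjacency matrix: every entry is 0 or 1. -/
def IsBinary {d : ℕ} (A : Matrix (Fin d) (Fin d) ℝ) : Prop :=
  ∀ i j, A i j = 0 ∨ A i j = 1

/-- The directed graph induced by `A` (edge `i → j` iff `A i j = 1`) is acyclic. -/
def IsAcyclicMat {d : ℕ} (A : Matrix (Fin d) (Fin d) ℝ) : Prop :=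
  Irreflexive (Relation.TransGen (fun i j => A i j = 1))

/-- The smooth acyclicity function `h(A) = trace (exp A) - d`. -/
noncomputable def hAcyc {d : ℕ} (A : Matrix (Fin d) (Fin d) ℝ) : ℝ :=
  Matrix.trace (NormedSpace.exp A) - d

open Classical in
/-- The penalized objective `F(A) = S(A) + λ₁·1[A ∉ DAGs] + λ₂·h(A)`. -/
noncomputable def penObj {d : ℕ} (S : Matrix (Fin d) (Fin d) ℝ → ℝ) (lam1 lam2 : ℝ)
    (A : Matrix (Fin d) (Fin d) ℝ) : ℝ :=
  S A + lam1 * (if IsAcyclicMat A then (0 : ℝ) else 1) + lam2 * hAcyc A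

/-!
If `A` has nonnegative entries, then `(A ^ k) i j > 0` exactly when the graph of positive entries
has a walk of length `k` from `i` to `j`. Hence the graph is acyclic iff every power `A ^ k` with
`k ≥ 1` has zero diagonal, i.e. zero trace. The `k = 0` term of `tr (exp A) = ∑ₖ tr (A ^ k) / k!` is
the size of `A` and the others are nonnegative, so `tr (exp A)` is the size iff the others vanish.
-/

open NormedSpace Relation
open scoped Nat

theorem transGen_nonempty_hom_iff_exists_path {V : Type*} [Quiver V] {a b : V} :
    TransGen (fun x y : V => Nonempty (x ⟶ y)) a b ↔ ∃ p : Quiver.Path a b, 0 < p.length := by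
  constructor
  · intro h
    induction h with
    | single hab =>
      obtain ⟨e⟩ := hab
      exact ⟨e.toPath, Nat.one_pos⟩
    | tail _ hbc ih =>
      obtain ⟨p, -⟩ := ih
      obtain ⟨e⟩ := hbc
      exact ⟨p.cons e, Nat.succ_pos _⟩
  · rintro ⟨p, hp⟩
    induction p with
    | nil => exact absurd hp (lt_irrefl 0)
    | cons q e ih =>
      rcases q.length.eq_zero_or_pos with hq | hq
      · obtain rfl := q.eq_of_length_zero hq
        exact .single ⟨e⟩
      · exact .tail (ih hq) ⟨e⟩

theorem trace_eq_zero_iff_of_diag_nonneg {n R : Type*} [Fintype n] [AddCommMonoid R]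
    [PartialOrder R] [IsOrderedAddMonoid R] {A : Matrix n n R} (hA : ∀ i, 0 ≤ A i i) :
    A.trace = 0 ↔ ∀ i, A i i = 0 := by
  simp only [Matrix.trace, Matrix.diag_apply, Finset.sum_eq_zero_iff_of_nonneg fun i _ => hA i,
    Finset.mem_univ, true_implies]

theorem trace_pow_nonneg {n R : Type*} [Fintype n] [DecidableEq n] [Semiring R] [PartialOrder R]
    [IsOrderedRing R] {A : Matrix n n R} (hA : ∀ i j, 0 ≤ A i j) (k : ℕ) : 0 ≤ (A ^ k).trace :=
  Finset.sum_nonneg fun i _ => Matrix.pow_apply_nonneg hA k i i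

section PositiveEntries

variable {n R : Type*} [Fintype n] [DecidableEq n] [Ring R] [LinearOrder R] [IsOrderedRing R]
  [PosMulStrictMono R] [Nontrivial R] {A : Matrix n n R}

theorem transGen_pos_iff_exists_pow_apply_pos (hA : ∀ i j, 0 ≤ A i j) {i j : n} :
    TransGen (fun i j => 0 < A i j) i j ↔ ∃ k > 0, 0 < (A ^ k) i j := by
  let : Quiver n := A.toQuiver
  have edge_iff (i j : n) : 0 < A i j ↔ Nonempty (i ⟶ j) :=
    ⟨fun h => ⟨⟨h⟩⟩, fun ⟨e⟩ => e.down⟩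
  simp only [edge_iff, transGen_nonempty_hom_iff_exists_path,
    Matrix.pow_apply_pos_iff_nonempty_path hA]
  constructor
  · rintro ⟨p, hp⟩
    exact ⟨p.length, hp, ⟨p, rfl⟩⟩
  · rintro ⟨_, hk, ⟨p, rfl⟩⟩
    exact ⟨p, hk⟩

theorem forall_not_transGen_pos_iff_trace_pow_eq_zero (hA : ∀ i j, 0 ≤ A i j) :
    (∀ i, ¬ TransGen (fun i j => 0 < A i j) i i) ↔ ∀ k > 0, (A ^ k).trace = 0 := by
  have hdiag (k : ℕ) (i : n) : 0 ≤ (A ^ k) i i := Matrix.pow_apply_nonneg hA k i i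
  calc (∀ i, ¬ TransGen (fun i j => 0 < A i j) i i)
    _ ↔ ∀ i, ∀ k > 0, (A ^ k) i i = 0 := by
      simp only [transGen_pos_iff_exists_pow_apply_pos hA, not_exists, not_and,
        (hdiag _ _).not_lt_iff_eq']
    _ ↔ ∀ k > 0, ∀ i, (A ^ k) i i = 0 :=
      ⟨fun h k hk i => h i k hk, fun h i k hk => h k hk i⟩
    _ ↔ ∀ k > 0, (A ^ k).trace = 0 := by
      simp only [trace_eq_zero_iff_of_diag_nonneg (hdiag _)]

end PositiveEntries

section Exponential

variable {n : Type*} [Fintype n] [DecidableEq n]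

section Series

variable (𝕂 : Type*) {𝔸 : Type*} [NontriviallyNormedField 𝕂] [CharZero 𝕂] [ContinuousSMul ℚ 𝕂]
  [NormedRing 𝔸] [NormedAlgebra 𝕂 𝔸] [CompleteSpace 𝔸]

theorem hasSum_trace_exp (A : Matrix n n 𝔸) :
    HasSum (fun k => (k !⁻¹ : 𝕂) • (A ^ k).trace) (exp A).trace := by
  let : NormedRing (Matrix n n 𝔸) := Matrix.linftyOpNormedRing
  let : NormedAlgebra 𝕂 (Matrix n n 𝔸) := Matrix.linftyOpNormedAlgebra
  -- Instance search does not see that the uniformity of this norm is the entrywise one.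
  have : @CompleteSpace (Matrix n n 𝔸) PseudoMetricSpace.toUniformSpace :=
    inferInstanceAs (CompleteSpace (n → n → 𝔸))
  have hexp : HasSum (fun k => (k !⁻¹ : 𝕂) • A ^ k) (exp A) := exp_series_hasSum_exp' A
  simpa only [Function.comp_def, Matrix.traceAddMonoidHom_apply, Matrix.trace_smul] using
    hexp.map (Matrix.traceAddMonoidHom n 𝔸) continuous_id.matrix_trace

theorem hasSum_trace_exp_sub_card (A : Matrix n n 𝔸) :
    HasSum (fun k => ((k + 1)! : 𝕂)⁻¹ • (A ^ (k + 1)).trace)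
      ((exp A).trace - Fintype.card n) := by
  simpa using (hasSum_nat_add_iff' 1).2 (hasSum_trace_exp 𝕂 A)

end Series

theorem trace_exp_sub_card_eq_zero_iff {A : Matrix n n ℝ} (hA : ∀ k, 0 ≤ (A ^ k).trace) :
    (exp A).trace - Fintype.card n = 0 ↔ ∀ k > 0, (A ^ k).trace = 0 := by
  have hsum : HasSum (fun k => ((k + 1)! : ℝ)⁻¹ * (A ^ (k + 1)).trace) _ :=
    hasSum_trace_exp_sub_card ℝ A
  have hterm (k : ℕ) : 0 ≤ ((k + 1)! : ℝ)⁻¹ * (A ^ (k + 1)).trace :=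
    mul_nonneg (by positivity) (hA _)
  calc (exp A).trace - Fintype.card n = 0
    _ ↔ ∀ k : ℕ, ((k + 1)! : ℝ)⁻¹ * (A ^ (k + 1)).trace = 0 := by
      simp only [← hsum.tsum_eq, ← hsum.summable.hasSum_iff, hasSum_zero_iff_of_nonneg hterm,
        funext_iff, Pi.zero_apply]
    _ ↔ ∀ k : ℕ, (A ^ (k + 1)).trace = 0 := by
      simp only [mul_eq_zero, inv_eq_zero, Nat.cast_eq_zero, Nat.factorial_ne_zero, false_or]
    _ ↔ ∀ k > 0, (A ^ k).trace = 0 :=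
      ⟨fun h k hk => Nat.succ_pred_eq_of_pos hk ▸ h k.pred, fun h k => h (k + 1) k.succ_pos⟩

end Exponential

namespace IsBinary

variable {d : ℕ} {A : Matrix (Fin d) (Fin d) ℝ}

theorem apply_nonneg (hA : IsBinary A) (i j : Fin d) : 0 ≤ A i j := by
  rcases hA i j with h | h <;> simp [h]

theorem apply_eq_one_iff_pos (hA : IsBinary A) (i j : Fin d) : A i j = 1 ↔ 0 < A i j := by
  rcases hA i j with h | h <;> simp [h]

theorem isAcyclicMat_iff (hA : IsBinary A) :
    IsAcyclicMat A ↔ ∀ i, ¬ TransGen (fun i j => 0 < A i j) i i := by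
  simp only [IsAcyclicMat, hA.apply_eq_one_iff_pos]
  rfl

end IsBinary

theorem acyclic_iff_h_eq_zero_general {n : Type*} [Fintype n] [DecidableEq n] {A : Matrix n n ℝ}
    (hA : ∀ i j, 0 ≤ A i j) :
    (∀ i, ¬ TransGen (fun i j => 0 < A i j) i i) ↔ (exp A).trace - Fintype.card n = 0 :=
  (forall_not_transGen_pos_iff_trace_pow_eq_zero hA).trans
    (trace_exp_sub_card_eq_zero_iff (trace_pow_nonneg hA)).symm

theorem acyclic_iff_h_eq_zero (d : ℕ) (A : Matrix (Fin d) (Fin d) ℝ) (hA : IsBinary A) :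
    IsAcyclicMat A ↔ Matrix.trace (NormedSpace.exp A) - (d : ℝ) = 0 := by
  simpa only [hA.isAcyclicMat_iff, Fintype.card_fin] using
    acyclic_iff_h_eq_zero_general hA.apply_nonneg
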